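/- Let n ≥ 1 be a natural number. Then for every a ∈ Λ̃_n, the strict inequality ∫_0^T |a(x) − λ̃_{2n−1}| dx > (2π(2n−1)(2n+1)/T) · cot((2n−1)π/(2(2n+1))) holds. In particular, the infimum β̃_{1,n} = inf_{a ∈ Λ̃_n} ‖a − λ̃_{2n−1}‖_{L¹(0,T)} is not attained. -/

import Mathlib

open MeasureTheory Set Real

/-- `u` is a solution of `u'' + a·u = 0` on `[c,d]`, with derivative function `v`. -/
def IsSolOn (a u v : ℝ → ℝ) (c d : ℝ) : Prop :=
  (∀ x ∈ Set.Icc c d, HasDerivWithinAt u (v x) (Set.Icc c d) x) ∧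
  (∀ x ∈ Set.Icc c d, v x = v c - ∫ t in c..x, a t * u t)

/-- Membership in `L_T`: measurable, `T`-periodic and integrable on `[0,T]`. -/
def MemLT (T : ℝ) (a : ℝ → ℝ) : Prop :=
  Measurable a ∧ (∀ x, a (x + T) = a x) ∧ IntegrableOn a (Set.Icc 0 T)

/-- `c ≺ d` : `c ≤ d` a.e. on `[0,T]` and `c < d` on a set of positive measure. -/
def Prec (T : ℝ) (c d : ℝ → ℝ) : Prop :=
  (∀ᵐ x ∂(volume.restrict (Set.Icc 0 T)), c x ≤ d x) ∧
  0 < volume {x ∈ Set.Icc 0 T | c x < d x}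

/-- `(u,v)` solves the periodic problem `u'' + a u = 0`, `u(0)=u(T)`, `u'(0)=u'(T)`. -/
def PeriodicSol (T : ℝ) (a u v : ℝ → ℝ) : Prop :=
  IsSolOn a u v 0 T ∧ u 0 = u T ∧ v 0 = v T

/-- `(u,v)` solves the antiperiodic problem `u'' + a u = 0`, `u(0)+u(T)=0`, `u'(0)+u'(T)=0`. -/
def AntiperiodicSol (T : ℝ) (a u v : ℝ → ℝ) : Prop :=
  IsSolOn a u v 0 T ∧ u 0 + u T = 0 ∧ v 0 + v T = 0

/-- The `(2n-1)`-st periodic eigenvalue `λ_{2n-1} = 4 n² π² / T²`. -/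
noncomputable def lam (T : ℝ) (n : ℕ) : ℝ := 4 * (n : ℝ) ^ 2 * Real.pi ^ 2 / T ^ 2

/-- The `(2n-1)`-st antiperiodic eigenvalue `λ̃_{2n-1} = (2n-1)² π² / T²`. -/
noncomputable def lamT (T : ℝ) (n : ℕ) : ℝ := (2 * (n : ℝ) - 1) ^ 2 * Real.pi ^ 2 / T ^ 2

/-- The set `Λ_n`. -/
def LambdaN (T : ℝ) (n : ℕ) : Set (ℝ → ℝ) :=
  {a | MemLT T a ∧ Prec T (fun _ => lam T n) a ∧
    ∃ u v : ℝ → ℝ, PeriodicSol T a u v ∧ ∃ x ∈ Set.Icc 0 T, u x ≠ 0}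

/-- The set `Λ̃_n`. -/
def LambdaTildeN (T : ℝ) (n : ℕ) : Set (ℝ → ℝ) :=
  {a | MemLT T a ∧ Prec T (fun _ => lamT T n) a ∧
    ∃ u v : ℝ → ℝ, AntiperiodicSol T a u v ∧ ∃ x ∈ Set.Icc 0 T, u x ≠ 0}

/-- The constant `β_{1,n}` of the periodic `L¹` Lyapunov inequality. -/
noncomputable def beta1 (T : ℝ) (n : ℕ) : ℝ :=
  8 * Real.pi * (n : ℝ) * ((n : ℝ) + 1) / T * Real.cot ((n : ℝ) * Real.pi / (2 * ((n : ℝ) + 1)))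

/-- The constant `β̃_{1,n}` of the antiperiodic `L¹` Lyapunov inequality. -/
noncomputable def betaT1 (T : ℝ) (n : ℕ) : ℝ :=
  2 * Real.pi * (2 * (n : ℝ) - 1) * (2 * (n : ℝ) + 1) / T *
    Real.cot ((2 * (n : ℝ) - 1) * Real.pi / (2 * (2 * (n : ℝ) + 1)))

/-!
Write `λ̃ = ω²` and `a = ω² + ω p`. In the plane of `(u', ω u)` the polar angle `θ` of a solution
satisfies `θ' = ω + p sin² θ`. If `p = 0`, then `θ` increases by exactly `(2 n - 1) π` over a
period; if `p ≥ 0` is nonzero, antiperiodicity forces an increase of at least `(2 n + 1) π`.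
Multiplying the angle equation by `G(θ) = min (csc² y) (csc² θ)` and using `G(θ) sin² θ ≤ 1` bounds
`∫ p` below by `∫ G dθ - ω ∫ G(θ) dt`. Here `G ≤ csc² y`, strictly somewhere because `θ` crosses
`π / 2 + π ℤ`, and `y = (2 n - 1) π / (2 (2 n + 1))` gives exactly the stated constant.

The constant is nevertheless the infimum: for a triangle wave `σ` of slope `±1` with smoothed
corners, `sin (ρ σ)` solves an equation whose potential is `ρ²` plus bumps concentrated at the
corners, and the total mass of these bumps tends to the constant as the smoothing is removed.
-/

/-- `f` is absolutely continuous on the interval with endpoints `a`, `b`, and `f'` is its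
derivative at almost every point there. -/
def HasACDeriv (f f' : ℝ → ℝ) (a b : ℝ) : Prop :=
  AbsolutelyContinuousOnInterval f a b ∧ ∀ᵐ x, x ∈ uIcc a b → HasDerivAt f (f' x) x

theorem absolutelyContinuousOnInterval_congr {X : Type*} [PseudoMetricSpace X] {f g : ℝ → X}
    {a b : ℝ} (hf : AbsolutelyContinuousOnInterval f a b) (hfg : EqOn f g (uIcc a b)) :
    AbsolutelyContinuousOnInterval g a b := by
  rw [absolutelyContinuousOnInterval_iff] at hf ⊢
  intro ε hε
  obtain ⟨δ, hδ, h⟩ := hf ε hε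
  refine ⟨δ, hδ, fun E hE hlen => ?_⟩
  rw [← Finset.sum_congr rfl fun i hi => ?_]
  · exact h E hE hlen
  · rw [hfg (hE.1 i hi).1, hfg (hE.1 i hi).2]

theorem absolutelyContinuousOnInterval_comp_lipschitzOnWith {X Y : Type*} [PseudoMetricSpace X]
    [PseudoMetricSpace Y] {f : ℝ → X} {φ : X → Y} {s : Set X} {K : NNReal} {a b : ℝ}
    (hf : AbsolutelyContinuousOnInterval f a b) (hφ : LipschitzOnWith K φ s)
    (hs : MapsTo f (uIcc a b) s) :
    AbsolutelyContinuousOnInterval (φ ∘ f) a b := by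
  rw [absolutelyContinuousOnInterval_iff] at hf ⊢
  intro ε hε
  obtain ⟨δ, hδ, h⟩ := hf (ε / (K + 1)) (by positivity)
  refine ⟨δ, hδ, fun E hE hlen => ?_⟩
  have hsum := h E hE hlen
  calc
    _ ≤ ∑ i ∈ Finset.range E.1, K * dist (f (E.2 i).1) (f (E.2 i).2) :=
      Finset.sum_le_sum fun i hi =>
        hφ.dist_le_mul _ (hs (hE.1 i hi).1) _ (hs (hE.1 i hi).2)
    _ = K * ∑ i ∈ Finset.range E.1, dist (f (E.2 i).1) (f (E.2 i).2) := by
      rw [Finset.mul_sum]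
    _ ≤ K * (ε / (K + 1)) := by gcongr
    _ < (K + 1) * (ε / (K + 1)) := by gcongr; linarith
    _ = ε := by field

theorem absolutelyContinuousOnInterval_comp_contDiff {f φ : ℝ → ℝ} {a b : ℝ}
    (hf : AbsolutelyContinuousOnInterval f a b) (hφ : ContDiff ℝ 1 φ) :
    AbsolutelyContinuousOnInterval (φ ∘ f) a b := by
  obtain ⟨C, hC⟩ := hf.exists_bound
  obtain ⟨K, hK⟩ := (hφ.contDiffOn (s := Icc (-C) C)).exists_lipschitzOnWith
    (by decide) (convex_Icc _ _) isCompact_Icc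
  exact absolutelyContinuousOnInterval_comp_lipschitzOnWith hf hK fun x hx => abs_le.mp (hC x hx)

namespace HasACDeriv

variable {f f' g g' : ℝ → ℝ} {a b : ℝ}

theorem continuousOn (hf : HasACDeriv f f' a b) : ContinuousOn f (uIcc a b) :=
  hf.1.continuousOn

theorem mono {c d : ℝ} (hf : HasACDeriv f f' a b) (h : uIcc c d ⊆ uIcc a b) :
    HasACDeriv f f' c d :=
  ⟨hf.1.mono h, hf.2.mono fun _ hx hxcd => hx (h hxcd)⟩

theorem congr_deriv (hf : HasACDeriv f f' a b) (h : EqOn f' g' (uIcc a b)) :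
    HasACDeriv f g' a b :=
  ⟨hf.1, hf.2.mono fun _ hx hxab => h hxab ▸ hx hxab⟩

theorem add (hf : HasACDeriv f f' a b) (hg : HasACDeriv g g' a b) :
    HasACDeriv (fun x => f x + g x) (fun x => f' x + g' x) a b := by
  refine ⟨hf.1.fun_add hg.1, ?_⟩
  filter_upwards [hf.2, hg.2] with x hfx hgx hx using (hfx hx).fun_add (hgx hx)

theorem sub (hf : HasACDeriv f f' a b) (hg : HasACDeriv g g' a b) :
    HasACDeriv (fun x => f x - g x) (fun x => f' x - g' x) a b := by
  refine ⟨hf.1.fun_sub hg.1, ?_⟩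
  filter_upwards [hf.2, hg.2] with x hfx hgx hx using (hfx hx).fun_sub (hgx hx)

theorem const_mul (c : ℝ) (hf : HasACDeriv f f' a b) :
    HasACDeriv (fun x => c * f x) (fun x => c * f' x) a b := by
  refine ⟨hf.1.const_mul c, ?_⟩
  filter_upwards [hf.2] with x hfx hx using (hfx hx).const_mul c

theorem mul (hf : HasACDeriv f f' a b) (hg : HasACDeriv g g' a b) :
    HasACDeriv (fun x => f x * g x) (fun x => f' x * g x + f x * g' x) a b := by
  refine ⟨hf.1.fun_mul hg.1, ?_⟩
  filter_upwards [hf.2, hg.2] with x hfx hgx hx using (hfx hx).fun_mul (hgx hx)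

theorem comp {φ φ' : ℝ → ℝ} (hf : HasACDeriv f f' a b) (hφ : ∀ x, HasDerivAt φ (φ' x) x)
    (hφ' : Continuous φ') :
    HasACDeriv (fun x => φ (f x)) (fun x => φ' (f x) * f' x) a b := by
  have hderiv : deriv φ = φ' := funext fun x => (hφ x).deriv
  have hcd : ContDiff ℝ 1 φ :=
    contDiff_one_iff_deriv.2 ⟨fun x => (hφ x).differentiableAt, hderiv ▸ hφ'⟩
  refine ⟨absolutelyContinuousOnInterval_comp_contDiff hf.1 hcd, ?_⟩
  filter_upwards [hf.2] with x hfx hx using (hφ (f x)).comp x (hfx hx)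

theorem of_eq_integral (hg : IntervalIntegrable g volume a b)
    (h : ∀ x ∈ uIcc a b, f x = f a + ∫ t in a..x, g t) : HasACDeriv f g a b := by
  set F : ℝ → ℝ := fun x => f a + ∫ t in a..x, g t
  have hconst : AbsolutelyContinuousOnInterval (fun _ : ℝ => f a) a b :=
    (contDiff_const (𝕜 := ℝ) (n := 1)).contDiffOn.absolutelyContinuousOnInterval
  have hF : AbsolutelyContinuousOnInterval F a b :=
    hconst.fun_add (hg.absolutelyContinuousOnInterval_intervalIntegral left_mem_uIcc)
  refine ⟨absolutelyContinuousOnInterval_congr hF fun x hx => (h x hx).symm, ?_⟩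
  have hne : ∀ᵐ x : ℝ, x ∉ ({a, b} : Set ℝ) :=
    measure_eq_zero_iff_ae_notMem.1 ((toFinite _).measure_zero volume)
  filter_upwards [hg.ae_hasDerivAt_integral, hne] with x hx hxne hxab
  have hnhds : uIcc a b ∈ nhds x := by
    simp only [mem_insert_iff, mem_singleton_iff, not_or] at hxne
    grind [uIcc, Icc_mem_nhds]
  exact ((hx hxab a left_mem_uIcc).const_add (f a)).congr_of_eventuallyEq
    (Filter.eventually_of_mem hnhds h)

theorem const_add_integral (c : ℝ) (hg : IntervalIntegrable g volume a b) :
    HasACDeriv (fun x => c + ∫ t in a..x, g t) g a b :=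
  of_eq_integral hg fun x _ => by simp

theorem deriv_ae_eq (hf : HasACDeriv f f' a b) : ∀ᵐ x, x ∈ uIoc a b → deriv f x = f' x := by
  filter_upwards [hf.2] with x hfx hx using (hfx (uIoc_subset_uIcc hx)).deriv

theorem intervalIntegrable (hf : HasACDeriv f f' a b) : IntervalIntegrable f' volume a b :=
  hf.1.intervalIntegrable_deriv.congr_ae
    ((ae_restrict_iff' measurableSet_uIoc).2 hf.deriv_ae_eq)

theorem integral_eq_sub (hf : HasACDeriv f f' a b) : ∫ x in a..b, f' x = f b - f a := by
  rw [← hf.1.integral_deriv_eq_sub]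
  exact (intervalIntegral.integral_congr_ae hf.deriv_ae_eq).symm

theorem eq_left_of_deriv_eq_zero (hf : HasACDeriv f f' a b) (h : EqOn f' 0 (uIcc a b)) {x : ℝ}
    (hx : x ∈ uIcc a b) : f x = f a := by
  have h0 := (hf.congr_deriv h).mono (uIcc_subset_uIcc_left hx)
  have := h0.integral_eq_sub
  simp only [Pi.zero_apply, intervalIntegral.integral_zero] at this
  linarith

theorem eq_mul_exp_integral {k : ℝ → ℝ} (hf : HasACDeriv f (fun x => k x * f x) a b)
    (hk : IntervalIntegrable k volume a b) {x : ℝ} (hx : x ∈ uIcc a b) :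
    f x = f a * exp (∫ t in a..x, k t) := by
  have hexp : HasACDeriv (fun x => exp (-(0 + ∫ t in a..x, k t))) _ a b :=
    (const_add_integral 0 hk).comp (φ := fun y => exp (-y))
      (fun y => (hasDerivAt_neg y).exp) (by fun_prop)
  have hconst := (hf.mul hexp).eq_left_of_deriv_eq_zero
    (fun y _ => by simp only [Pi.zero_apply]; ring) hx
  simp only [zero_add, exp_neg, intervalIntegral.integral_same, exp_zero, inv_one,
    mul_one] at hconst
  rw [← hconst, inv_mul_cancel_right₀ (exp_ne_zero _)]

theorem mul_sub_le {c : ℝ} (hf : HasACDeriv f f' a b) (hab : a ≤ b)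
    (hc : ∀ᵐ x ∂volume.restrict (Icc a b), c ≤ f' x) : c * (b - a) ≤ f b - f a := by
  rw [← hf.integral_eq_sub, mul_comm, ← smul_eq_mul, ← intervalIntegral.integral_const]
  exact intervalIntegral.integral_mono_ae_restrict hab intervalIntegrable_const
    hf.intervalIntegrable hc

end HasACDeriv

section PruferAngle

variable {ω a b : ℝ} {p x y : ℝ → ℝ}

theorem intervalIntegrable_mul_of_bounded {f : ℝ → ℝ} {C : ℝ}
    (hp : IntervalIntegrable p volume a b) (hf : AEMeasurable f (volume.restrict (uIoc a b)))
    (hC : ∀ t, |f t| ≤ C) : IntervalIntegrable (fun t => p t * f t) volume a b := by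
  rw [intervalIntegrable_iff] at hp ⊢
  exact hp.mul_bdd hf.aestronglyMeasurable (Filter.Eventually.of_forall hC)

theorem abs_sq_div_sq_add_sq_le_one (x y : ℝ) : |y ^ 2 / (x ^ 2 + y ^ 2)| ≤ 1 := by
  rw [abs_of_nonneg (by positivity)]
  exact div_le_one_of_le₀ (by nlinarith) (by positivity)

theorem abs_neg_mul_div_sq_add_sq_le_one (x y : ℝ) : |-(x * y / (x ^ 2 + y ^ 2))| ≤ 1 := by
  rw [abs_neg, abs_div, abs_of_nonneg (by positivity : 0 ≤ x ^ 2 + y ^ 2)]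
  refine div_le_one_of_le₀ (abs_le.2 ⟨?_, ?_⟩) (by positivity) <;>
    nlinarith [sq_nonneg (x + y), sq_nonneg (x - y)]

-- Turning the frame at the rate of `arg (x + i y)` makes both components of `(x, y)` solve the
-- same scalar equation `f' = k f`; where `x = y = 0` the junk quotients `0 / 0` are harmless.
theorem HasACDeriv.rotating_frame {θ : ℝ → ℝ}
    (hx : HasACDeriv x (fun t => -((ω + p t) * y t)) a b)
    (hy : HasACDeriv y (fun t => ω * x t) a b)
    (hθ : HasACDeriv θ (fun t => ω + p t * (y t ^ 2 / (x t ^ 2 + y t ^ 2))) a b) :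
    HasACDeriv (fun t => x t * cos (θ t) + y t * sin (θ t))
      (fun t => p t * -(x t * y t / (x t ^ 2 + y t ^ 2)) *
        (x t * cos (θ t) + y t * sin (θ t))) a b ∧
    HasACDeriv (fun t => y t * cos (θ t) - x t * sin (θ t))
      (fun t => p t * -(x t * y t / (x t ^ 2 + y t ^ 2)) *
        (y t * cos (θ t) - x t * sin (θ t))) a b := by
  have hcos := hθ.comp hasDerivAt_cos (by fun_prop)
  have hsin := hθ.comp hasDerivAt_sin (by fun_prop)
  constructor
  · refine ((hx.mul hcos).add (hy.mul hsin)).congr_deriv fun t _ => ?_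
    rcases eq_or_ne (x t ^ 2 + y t ^ 2) 0 with h | h
    · have hxt : x t = 0 := by nlinarith
      have hyt : y t = 0 := by nlinarith
      simp [hxt, hyt]
    · field_simp; ring
  · refine ((hy.mul hcos).sub (hx.mul hsin)).congr_deriv fun t _ => ?_
    rcases eq_or_ne (x t ^ 2 + y t ^ 2) 0 with h | h
    · have hxt : x t = 0 := by nlinarith
      have hyt : y t = 0 := by nlinarith
      simp [hxt, hyt]
    · field_simp; ring

theorem intervalIntegrable_pruferSlope (hp : IntervalIntegrable p volume a b)
    (hx : ContinuousOn x (uIcc a b)) (hy : ContinuousOn y (uIcc a b)) :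
    IntervalIntegrable (fun t => p t * (y t ^ 2 / (x t ^ 2 + y t ^ 2))) volume a b ∧
    IntervalIntegrable (fun t => p t * -(x t * y t / (x t ^ 2 + y t ^ 2))) volume a b := by
  have hxm := (hx.mono uIoc_subset_uIcc).aemeasurable (μ := volume) measurableSet_uIoc
  have hym := (hy.mono uIoc_subset_uIcc).aemeasurable (μ := volume) measurableSet_uIoc
  have hE := (hxm.pow_const 2).add (hym.pow_const 2)
  exact ⟨intervalIntegrable_mul_of_bounded hp ((hym.pow_const 2).div hE)
      fun t => abs_sq_div_sq_add_sq_le_one (x t) (y t),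
    intervalIntegrable_mul_of_bounded hp ((hxm.mul hym).div hE).neg
      fun t => abs_neg_mul_div_sq_add_sq_le_one (x t) (y t)⟩

theorem HasACDeriv.exists_polar_of_polar_left {θ : ℝ → ℝ} {r₀ : ℝ}
    (hp : IntervalIntegrable p volume a b)
    (hx : HasACDeriv x (fun t => -((ω + p t) * y t)) a b)
    (hy : HasACDeriv y (fun t => ω * x t) a b)
    (hθ : HasACDeriv θ (fun t => ω + p t * (y t ^ 2 / (x t ^ 2 + y t ^ 2))) a b)
    (hxa : x a = r₀ * cos (θ a)) (hya : y a = r₀ * sin (θ a)) :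
    ∃ K : ℝ → ℝ, ∀ t ∈ uIcc a b,
      x t = r₀ * exp (K t) * cos (θ t) ∧ y t = r₀ * exp (K t) * sin (θ t) := by
  obtain ⟨hradial, htangential⟩ := hx.rotating_frame hy hθ
  have hk := (intervalIntegrable_pruferSlope hp hx.continuousOn hy.continuousOn).2
  refine ⟨fun t => ∫ s in a..t, p s * -(x s * y s / (x s ^ 2 + y s ^ 2)), fun t ht => ?_⟩
  have hr := hradial.eq_mul_exp_integral hk ht
  have h0 := htangential.eq_mul_exp_integral hk ht
  rw [hxa, hya] at hr h0
  set R := exp (∫ s in a..t, p s * -(x s * y s / (x s ^ 2 + y s ^ 2)))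
  have ha := sin_sq_add_cos_sq (θ a)
  have ht := sin_sq_add_cos_sq (θ t)
  constructor
  · linear_combination
      cos (θ t) * hr - sin (θ t) * h0 - x t * ht + r₀ * R * cos (θ t) * ha
  · linear_combination
      sin (θ t) * hr + cos (θ t) * h0 - y t * ht + r₀ * R * sin (θ t) * ha

theorem exists_pruferAngle (hp : IntervalIntegrable p volume a b)
    (hx : HasACDeriv x (fun t => -((ω + p t) * y t)) a b)
    (hy : HasACDeriv y (fun t => ω * x t) a b)
    (hne : ∃ t ∈ uIcc a b, x t ≠ 0 ∨ y t ≠ 0) :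
    ∃ θ r : ℝ → ℝ, HasACDeriv θ (fun t => ω + p t * sin (θ t) ^ 2) a b ∧
      ∀ t ∈ uIcc a b, 0 < r t ∧ x t = r t * cos (θ t) ∧ y t = r t * sin (θ t) := by
  have hslope := (intervalIntegrable_pruferSlope hp hx.continuousOn hy.continuousOn).1
  set z : ℂ := ⟨x a, y a⟩
  set θ : ℝ → ℝ := fun t => z.arg + ∫ s in a..t, (ω + p s * (y s ^ 2 / (x s ^ 2 + y s ^ 2)))
  have hθ : HasACDeriv θ _ a b :=
    .const_add_integral z.arg (intervalIntegrable_const.add hslope)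
  have hθa : θ a = z.arg := by simp [θ]
  obtain ⟨K, hpolar⟩ := hx.exists_polar_of_polar_left hp hy hθ (r₀ := ‖z‖)
    (by rw [hθa, Complex.norm_mul_cos_arg]) (by rw [hθa, Complex.norm_mul_sin_arg])
  have hz : 0 < ‖z‖ := by
    refine norm_pos_iff.2 fun hz => ?_
    obtain ⟨t, ht, hxy⟩ := hne
    simp [hpolar t ht, hz] at hxy
  have hrpos : ∀ t, 0 < ‖z‖ * exp (K t) := fun t => by positivity
  refine ⟨θ, fun t => ‖z‖ * exp (K t), hθ.congr_deriv fun t ht => ?_,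
    fun t ht => ⟨hrpos t, hpolar t ht⟩⟩
  obtain ⟨hxt, hyt⟩ := hpolar t ht
  have hnorm : x t ^ 2 + y t ^ 2 = (‖z‖ * exp (K t)) ^ 2 := by
    rw [hxt, hyt]
    linear_combination (‖z‖ * exp (K t)) ^ 2 * sin_sq_add_cos_sq (θ t)
  simp only [hnorm]
  rw [hyt, mul_pow _ (sin _), mul_div_cancel_left₀ _ (pow_ne_zero 2 (hrpos t).ne')]

end PruferAngle

section AngleIncrement

variable {ω a b : ℝ} {p θ : ℝ → ℝ}

theorem exists_eq_add_of_polar_eq {r s α β : ℝ} (hr : 0 < r) (hs : 0 < s)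
    (hcos : r * cos α = s * cos β) (hsin : r * sin α = s * sin β) :
    ∃ k : ℤ, α = β + k * (2 * π) := by
  have hrs : r ^ 2 = s ^ 2 := by
    linear_combination (r * cos α + s * cos β) * hcos + (r * sin α + s * sin β) * hsin -
      r ^ 2 * sin_sq_add_cos_sq α + s ^ 2 * sin_sq_add_cos_sq β
  obtain rfl : r = s := (pow_left_inj₀ hr.le hs.le two_ne_zero).1 hrs
  have hangle : (α : Angle) = β :=
    Angle.cos_sin_inj (mul_left_cancel₀ hr.ne' hcos) (mul_left_cancel₀ hr.ne' hsin)
  obtain ⟨k, hk⟩ := Angle.angle_eq_iff_two_pi_dvd_sub.1 hangle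
  exact ⟨k, by linarith⟩

theorem HasACDeriv.strictMonoOn_of_le_deriv {f f' : ℝ → ℝ} (hω : 0 < ω) (hf : HasACDeriv f f' a b)
    (hab : a ≤ b) (hf' : ∀ᵐ t ∂volume.restrict (Icc a b), ω ≤ f' t) :
    StrictMonoOn f (Icc a b) := by
  intro s hs t ht hst
  have hsub : Icc s t ⊆ Icc a b := Icc_subset_Icc hs.1 ht.2
  have hle := (hf.mono (c := s) (d := t) (by rwa [uIcc_of_le hst.le, uIcc_of_le hab])).mul_sub_le
    hst.le (ae_restrict_of_ae_restrict_of_subset hsub hf')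
  nlinarith [mul_pos hω (sub_pos.2 hst)]

theorem ae_sin_ne_zero_of_injOn {s : Set ℝ} (hs : MeasurableSet s) (hθ : InjOn θ s) :
    ∀ᵐ t ∂volume.restrict s, sin (θ t) ≠ 0 := by
  have hzeros : {y : ℝ | sin y = 0}.Countable := by
    refine (countable_range fun k : ℤ => (k : ℝ) * π).mono fun y hy => ?_
    exact sin_eq_zero_iff.1 hy
  have hcount : (s ∩ {t | sin (θ t) = 0}).Countable :=
    MapsTo.countable_of_injOn (t := {y : ℝ | sin y = 0}) (f := θ) (fun t ht => ht.2)
      (hθ.mono inter_subset_left) hzeros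
  rw [ae_restrict_iff' hs]
  filter_upwards [hcount.ae_notMem volume] with t ht hts hsin using ht ⟨hts, hsin⟩

theorem HasACDeriv.mul_sub_lt_pruferAngle_sub (hω : 0 < ω) (hab : a ≤ b)
    (hθ : HasACDeriv θ (fun t => ω + p t * sin (θ t) ^ 2) a b)
    (hp : 0 ≤ᵐ[volume.restrict (Icc a b)] p) (hne : ¬ p =ᵐ[volume.restrict (Icc a b)] 0) :
    ω * (b - a) < θ b - θ a := by
  have hderiv : ∀ᵐ t ∂volume.restrict (Icc a b), ω ≤ ω + p t * sin (θ t) ^ 2 := by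
    filter_upwards [hp] with t ht
    have : 0 ≤ p t * sin (θ t) ^ 2 := mul_nonneg ht (sq_nonneg _)
    linarith
  refine (hθ.mul_sub_le hab hderiv).lt_of_ne fun heq => hne ?_
  have hsin := ae_sin_ne_zero_of_injOn measurableSet_Icc
    (hθ.strictMonoOn_of_le_deriv hω hab hderiv).injOn
  have hint : IntervalIntegrable (fun t => p t * sin (θ t) ^ 2) volume a b := by
    simpa using hθ.intervalIntegrable.sub (intervalIntegrable_const (c := ω))
  have hzero : ∫ t in a..b, p t * sin (θ t) ^ 2 = 0 := by
    have := hθ.integral_eq_sub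
    rw [intervalIntegral.integral_add intervalIntegrable_const hint,
      intervalIntegral.integral_const, smul_eq_mul] at this
    linarith
  have hnonneg : 0 ≤ᵐ[volume.restrict (Ioc a b)] fun t => p t * sin (θ t) ^ 2 := by
    filter_upwards [ae_restrict_of_ae_restrict_of_subset Ioc_subset_Icc_self hp] with t ht
      using mul_nonneg ht (sq_nonneg _)
  rw [intervalIntegral.integral_eq_zero_iff_of_le_of_nonneg_ae hab hnonneg hint,
    Measure.restrict_congr_set Ioc_ae_eq_Icc] at hzero
  filter_upwards [hzero, hsin] with t ht hs
  simpa [hs] using ht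

theorem HasACDeriv.add_two_mul_pi_le_pruferAngle_sub {m : ℕ} {x y r : ℝ → ℝ} (hω : 0 < ω)
    (hab : a ≤ b) (hθ : HasACDeriv θ (fun t => ω + p t * sin (θ t) ^ 2) a b)
    (hp : 0 ≤ᵐ[volume.restrict (Icc a b)] p) (hne : ¬ p =ᵐ[volume.restrict (Icc a b)] 0)
    (hpolar : ∀ t ∈ uIcc a b, 0 < r t ∧ x t = r t * cos (θ t) ∧ y t = r t * sin (θ t))
    (hx : x b = (-1) ^ m * x a) (hy : y b = (-1) ^ m * y a) (hm : ω * (b - a) = m * π) :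
    (m + 2) * π ≤ θ b - θ a := by
  obtain ⟨hra, hxa, hya⟩ := hpolar a left_mem_uIcc
  obtain ⟨hrb, hxb, hyb⟩ := hpolar b right_mem_uIcc
  obtain ⟨k, hk⟩ : ∃ k : ℤ, θ b = θ a + m * π + k * (2 * π) := by
    refine exists_eq_add_of_polar_eq hrb hra ?_ ?_
    · rw [cos_add_nat_mul_pi, ← hxb, hx, hxa]; ring
    · rw [sin_add_nat_mul_pi, ← hyb, hy, hya]; ring
  have hlt := hθ.mul_sub_lt_pruferAngle_sub hω hab hp hne
  have hkpos : (0 : ℝ) < k := by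
    have : 0 < k * (2 * π) := by linarith
    exact pos_of_mul_pos_left this (by positivity)
  have hk1 : (1 : ℝ) ≤ k := by exact_mod_cast hkpos
  nlinarith [pi_pos]

end AngleIncrement

section BathtubWeight

/-- The truncated weight `min (csc² y) (csc² t)`, as a function of `t`. Among the weights `G` with
`G · sin² ≤ 1`, truncation at the right height `y` makes the weighted angle equation
`G(θ) θ' = ω G(θ) + p G(θ) sin² θ` yield the sharp lower bound for `∫ p`. -/
noncomputable def truncCscSq (y t : ℝ) : ℝ := (max (sin y ^ 2) (sin t ^ 2))⁻¹

variable {y : ℝ}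

theorem max_sin_sq_pos (hy : sin y ≠ 0) (t : ℝ) : 0 < max (sin y ^ 2) (sin t ^ 2) :=
  lt_max_of_lt_left (by positivity)

theorem continuous_truncCscSq (hy : sin y ≠ 0) : Continuous (truncCscSq y) :=
  Continuous.inv₀ (by fun_prop) fun t => (max_sin_sq_pos hy t).ne'

theorem truncCscSq_nonneg (y t : ℝ) : 0 ≤ truncCscSq y t :=
  inv_nonneg.2 (le_max_of_le_left (sq_nonneg _))

theorem truncCscSq_le (hy : sin y ≠ 0) (t : ℝ) : truncCscSq y t ≤ (sin y ^ 2)⁻¹ :=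
  inv_anti₀ (by positivity) (le_max_left _ _)

theorem truncCscSq_lt (hy : sin y ≠ 0) {t : ℝ} (h : sin y ^ 2 < sin t ^ 2) :
    truncCscSq y t < (sin y ^ 2)⁻¹ :=
  inv_strictAnti₀ (by positivity) (lt_max_of_lt_right h)

theorem truncCscSq_mul_sin_sq_le_one (hy : sin y ≠ 0) (t : ℝ) :
    truncCscSq y t * sin t ^ 2 ≤ 1 :=
  inv_mul_le_one_of_le₀ (le_max_right _ _) (max_sin_sq_pos hy t).le

theorem truncCscSq_periodic (y : ℝ) : Function.Periodic (truncCscSq y) π := fun t => by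
  simp [truncCscSq, sin_add_pi]

theorem sin_pos_of_mem_Ioo_pi_div_two (hy : y ∈ Ioo 0 (π / 2)) : 0 < sin y :=
  sin_pos_of_pos_of_lt_pi hy.1 (by linarith [hy.2, pi_pos])

theorem integral_truncCscSq_center (hy : y ∈ Ioo 0 (π / 2)) :
    ∫ t in (-y)..y, truncCscSq y t = 2 * y / sin y ^ 2 := by
  have hconst : EqOn (truncCscSq y) (fun _ => (sin y ^ 2)⁻¹) (uIcc (-y) y) := fun t ht => by
    rw [uIcc_of_le (by linarith [hy.1])] at ht
    have hsin : |sin t| ≤ sin y := by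
      rw [abs_le, ← sin_neg]
      exact ⟨sin_le_sin_of_le_of_le_pi_div_two (by linarith [hy.2]) (by linarith [ht.2, hy.2]) ht.1,
        sin_le_sin_of_le_of_le_pi_div_two (by linarith [ht.1, hy.2]) hy.2.le ht.2⟩
    rw [truncCscSq, max_eq_left (sq_le_sq.2 (hsin.trans (le_abs_self _)))]
  rw [intervalIntegral.integral_congr hconst, intervalIntegral.integral_const, smul_eq_mul]
  ring

theorem hasDerivAt_neg_cot {t : ℝ} (ht : sin t ≠ 0) :
    HasDerivAt (fun t => -cot t) (sin t ^ 2)⁻¹ t := by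
  have h := ((hasDerivAt_cos t).fun_div (hasDerivAt_sin t) ht).fun_neg
  simp only [cot_eq_cos_div_sin]
  refine h.congr_deriv ?_
  rw [← neg_div, inv_eq_one_div]
  congr 1
  linear_combination sin_sq_add_cos_sq t

theorem integral_truncCscSq_outer (hy : y ∈ Ioo 0 (π / 2)) :
    ∫ t in y..(-y + π), truncCscSq y t = 2 * cot y := by
  have hsy : 0 < sin y := sin_pos_of_mem_Ioo_pi_div_two hy
  have hderiv : ∀ t ∈ uIcc y (-y + π), HasDerivAt (fun t => -cot t) (truncCscSq y t) t := by
    intro t ht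
    rw [uIcc_of_le (by linarith [hy.2])] at ht
    have hle : sin y ≤ sin t := by
      rcases le_total t (π / 2) with h | h
      · exact sin_le_sin_of_le_of_le_pi_div_two (by linarith [hy.1, pi_pos]) h ht.1
      · rw [← sin_pi_sub t]
        exact sin_le_sin_of_le_of_le_pi_div_two (by linarith [hy.1, pi_pos]) (by linarith)
          (by linarith [ht.2])
    rw [truncCscSq, max_eq_right (pow_le_pow_left₀ hsy.le hle 2)]
    exact hasDerivAt_neg_cot (hsy.trans_le hle).ne'
  rw [intervalIntegral.integral_eq_sub_of_hasDerivAt hderiv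
    ((continuous_truncCscSq hsy.ne').intervalIntegrable _ _)]
  have hcot : cot (-y + π) = -cot y := by
    rw [cot_eq_cos_div_sin, cot_eq_cos_div_sin, neg_add_eq_sub, cos_pi_sub, sin_pi_sub, neg_div]
  rw [hcot]
  ring

theorem integral_truncCscSq_add_nat_mul_pi (hy : y ∈ Ioo 0 (π / 2)) (c : ℝ) (N : ℕ) :
    ∫ t in c..(c + N * π), truncCscSq y t = N * (2 * y / sin y ^ 2 + 2 * cot y) := by
  have hsy : sin y ≠ 0 := (sin_pos_of_mem_Ioo_pi_div_two hy).ne'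
  have hint : ∀ s t : ℝ, IntervalIntegrable (truncCscSq y) volume s t := fun s t =>
    (continuous_truncCscSq hsy).intervalIntegrable s t
  have hper := truncCscSq_periodic y
  have h := hper.intervalIntegral_add_zsmul_eq (N : ℤ) c hint
  simp only [zsmul_eq_mul, Int.cast_natCast] at h
  rw [h, hper.intervalIntegral_add_eq c (-y),
    ← intervalIntegral.integral_add_adjacent_intervals (hint _ y) (hint _ _),
    integral_truncCscSq_center hy, integral_truncCscSq_outer hy]

theorem exists_sin_sq_eq_one_of_pi_le {θ : ℝ → ℝ} {a b : ℝ} (hab : a ≤ b)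
    (hθ : ContinuousOn θ (Icc a b)) (h : π ≤ θ b - θ a) : ∃ t ∈ Icc a b, sin (θ t) ^ 2 = 1 := by
  have hper : Function.Periodic (fun t => sin t ^ 2) π := fun t => by simp [sin_add_pi]
  obtain ⟨c, hc, hsin⟩ := hper.exists_mem_Ico pi_pos (π / 2) (θ a)
  obtain ⟨t, ht, rfl⟩ := intermediate_value_Icc hab hθ ⟨hc.1, by linarith [hc.2]⟩
  exact ⟨t, ht, by simpa using hsin.symm⟩

theorem integral_truncCscSq_comp_lt {θ : ℝ → ℝ} {a b : ℝ} (hy : y ∈ Ioo 0 (π / 2)) (hab : a < b)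
    (hθ : ContinuousOn θ (Icc a b)) (h : π ≤ θ b - θ a) :
    ∫ t in a..b, truncCscSq y (θ t) < (b - a) / sin y ^ 2 := by
  have hsy : 0 < sin y := sin_pos_of_mem_Ioo_pi_div_two hy
  have hsy1 : sin y < 1 := by
    rw [← sin_pi_div_two]
    exact sin_lt_sin_of_lt_of_le_pi_div_two (by linarith [hy.1, pi_pos]) le_rfl hy.2
  obtain ⟨t, ht, hsin⟩ := exists_sin_sq_eq_one_of_pi_le hab.le hθ h
  rw [div_eq_mul_inv, ← smul_eq_mul, ← intervalIntegral.integral_const]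
  refine intervalIntegral.integral_lt_integral_of_continuousOn_of_le_of_exists_lt hab
    ((continuous_truncCscSq hsy.ne').comp_continuousOn hθ) continuousOn_const
    (fun s _ => truncCscSq_le hsy.ne' _) ⟨t, ht, truncCscSq_lt hsy.ne' ?_⟩
  rw [hsin]
  nlinarith

theorem HasACDeriv.integral_truncCscSq_comp_mul {θ θ' : ℝ → ℝ} {a b : ℝ} (hy : sin y ≠ 0)
    (hθ : HasACDeriv θ θ' a b) :
    IntervalIntegrable (fun t => truncCscSq y (θ t) * θ' t) volume a b ∧
    ∫ t in a..b, truncCscSq y (θ t) * θ' t = ∫ t in θ a..θ b, truncCscSq y t := by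
  have hc := continuous_truncCscSq hy
  have hcomp := hθ.comp (fun t => (hc.integral_hasStrictDerivAt 0 t).hasDerivAt) hc
  refine ⟨hcomp.intervalIntegrable, ?_⟩
  rw [hcomp.integral_eq_sub, intervalIntegral.integral_interval_sub_left] <;>
    exact hc.intervalIntegrable _ _

theorem le_integral_truncCscSq {N : ℕ} (hy : y ∈ Ioo 0 (π / 2)) {c d : ℝ} (h : N * π ≤ d - c) :
    N * (2 * y / sin y ^ 2 + 2 * cot y) ≤ ∫ t in c..d, truncCscSq y t := by
  rw [← integral_truncCscSq_add_nat_mul_pi hy c]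
  refine intervalIntegral.integral_mono_interval le_rfl ?_ (by linarith)
    (Filter.Eventually.of_forall (truncCscSq_nonneg y))
    ((continuous_truncCscSq (sin_pos_of_mem_Ioo_pi_div_two hy).ne').intervalIntegrable _ _)
  linarith [mul_nonneg N.cast_nonneg pi_pos.le]

theorem HasACDeriv.integral_truncCscSq_le {ω a b : ℝ} {p θ : ℝ → ℝ} (hy : sin y ≠ 0)
    (hab : a ≤ b) (hpi : IntervalIntegrable p volume a b)
    (hp : 0 ≤ᵐ[volume.restrict (Icc a b)] p)
    (hθ : HasACDeriv θ (fun t => ω + p t * sin (θ t) ^ 2) a b) :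
    ∫ t in θ a..θ b, truncCscSq y t ≤
      ω * (∫ t in a..b, truncCscSq y (θ t)) + ∫ t in a..b, p t := by
  obtain ⟨hint, hcov⟩ := hθ.integral_truncCscSq_comp_mul hy
  have hGθ : IntervalIntegrable (fun t => ω * truncCscSq y (θ t)) volume a b :=
    (((continuous_truncCscSq hy).comp_continuousOn hθ.continuousOn).intervalIntegrable).const_mul ω
  rw [← hcov, ← intervalIntegral.integral_const_mul, ← intervalIntegral.integral_add hGθ hpi]
  refine intervalIntegral.integral_mono_ae_restrict hab hint (hGθ.add hpi) ?_
  filter_upwards [hp] with t ht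
  nlinarith [mul_le_mul_of_nonneg_left (truncCscSq_mul_sin_sq_le_one hy (θ t)) ht]

theorem HasACDeriv.two_mul_cot_lt_integral {ω a b : ℝ} {p θ : ℝ → ℝ} {N : ℕ} (hN : 0 < N)
    (hω : 0 < ω) (hab : a < b) (hωN : ω * (b - a) < N * π)
    (hpi : IntervalIntegrable p volume a b) (hp : 0 ≤ᵐ[volume.restrict (Icc a b)] p)
    (hθ : HasACDeriv θ (fun t => ω + p t * sin (θ t) ^ 2) a b) (h : N * π ≤ θ b - θ a) :
    2 * N * cot (ω * (b - a) / (2 * N)) < ∫ t in a..b, p t := by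
  have hN1 : (1 : ℝ) ≤ N := by exact_mod_cast hN
  have hba : 0 < b - a := sub_pos.2 hab
  obtain ⟨y, rfl⟩ : ∃ y, ω = 2 * N * y / (b - a) := ⟨ω * (b - a) / (2 * N), by field_simp⟩
  rw [div_mul_cancel₀ _ hba.ne'] at hωN ⊢
  rw [mul_div_cancel_left₀ _ (by positivity)]
  have hy : y ∈ Ioo 0 (π / 2) := by
    refine ⟨?_, by nlinarith⟩
    have := (div_pos_iff_of_pos_right hba).1 hω
    exact pos_of_mul_pos_right this (by positivity)
  have hupper := hθ.integral_truncCscSq_le (sin_pos_of_mem_Ioo_pi_div_two hy).ne' hab.le hpi hp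
  have hstrict := integral_truncCscSq_comp_lt hy hab (uIcc_of_le hab.le ▸ hθ.continuousOn)
    (by nlinarith [pi_pos])
  calc 2 * N * cot y
      = N * (2 * y / sin y ^ 2 + 2 * cot y) - 2 * N * y / (b - a) * ((b - a) / sin y ^ 2) := by
        field_simp
        ring
    _ < (∫ t in θ a..θ b, truncCscSq y t) -
          2 * N * y / (b - a) * ∫ t in a..b, truncCscSq y (θ t) :=
        by linarith [le_integral_truncCscSq hy h, mul_lt_mul_of_pos_left hstrict hω]
    _ ≤ ∫ t in a..b, p t := by linarith

end BathtubWeight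

section LowerBound

variable {a u v : ℝ → ℝ} {c d : ℝ}

theorem IsSolOn.hasACDeriv_right (hsol : IsSolOn a u v c d) (hcd : c ≤ d)
    (ha : IntervalIntegrable a volume c d) :
    HasACDeriv v (fun t => -(a t * u t)) c d := by
  have hu : ContinuousOn u (uIcc c d) := by
    rw [uIcc_of_le hcd]
    exact fun x hx => (hsol.1 x hx).continuousWithinAt
  refine .of_eq_integral (ha.mul_continuousOn hu).neg fun x hx => ?_
  rw [uIcc_of_le hcd] at hx
  rw [intervalIntegral.integral_neg, ← sub_eq_add_neg, ← hsol.2 x hx]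

theorem IsSolOn.hasACDeriv_left (hsol : IsSolOn a u v c d) (hcd : c ≤ d)
    (ha : IntervalIntegrable a volume c d) : HasACDeriv u v c d := by
  have hv := (hsol.hasACDeriv_right hcd ha).continuousOn
  refine .of_eq_integral hv.intervalIntegrable fun x hx => ?_
  have hvx : ContinuousOn v (uIcc c x) := hv.mono (uIcc_subset_uIcc_left hx)
  rw [uIcc_of_le hcd] at hx
  have hsub : Icc c x ⊆ Icc c d := Icc_subset_Icc_right hx.2
  rw [intervalIntegral.integral_eq_sub_of_hasDerivAt_of_le hx.1
    (fun t ht => ((hsol.1 t (hsub ht)).mono hsub).continuousWithinAt) (fun t ht => ?_)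
    hvx.intervalIntegrable, add_sub_cancel]
  exact (hsol.1 t (hsub (Ioo_subset_Icc_self ht))).hasDerivAt
    (Icc_mem_nhds ht.1 (ht.2.trans_le hx.2))

theorem IsSolOn.two_mul_cot_lt_integral_sub {ω : ℝ} {m : ℕ} (hsol : IsSolOn a u v c d)
    (hω : 0 < ω) (hcd : c < d) (hm : ω * (d - c) = m * π) (ha : IntervalIntegrable a volume c d)
    (hle : ∀ᵐ t ∂volume.restrict (Icc c d), ω ^ 2 ≤ a t)
    (hne : ¬ ∀ᵐ t ∂volume.restrict (Icc c d), a t = ω ^ 2)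
    (hu : u d = (-1) ^ m * u c) (hv : v d = (-1) ^ m * v c) (hu0 : ∃ t ∈ Icc c d, u t ≠ 0) :
    2 * (m + 2) * ω * cot (m * π / (2 * (m + 2))) < ∫ t in c..d, (a t - ω ^ 2) := by
  set p : ℝ → ℝ := fun t => (a t - ω ^ 2) / ω
  have hpa : ∀ t, a t - ω ^ 2 = ω * p t := fun t => (mul_div_cancel₀ _ hω.ne').symm
  have hpi : IntervalIntegrable p volume c d := (ha.sub intervalIntegrable_const).div_const ω
  have hp : 0 ≤ᵐ[volume.restrict (Icc c d)] p := by
    filter_upwards [hle] with t ht using div_nonneg (sub_nonneg.2 ht) hω.le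
  have hp0 : ¬ p =ᵐ[volume.restrict (Icc c d)] 0 := fun h => hne <| by
    filter_upwards [h] with t ht
    rw [← sub_eq_zero, hpa, ht, Pi.zero_apply, mul_zero]
  have hx : HasACDeriv v (fun t => -((ω + p t) * (ω * u t))) c d :=
    (hsol.hasACDeriv_right hcd.le ha).congr_deriv fun t _ => by
      linear_combination -u t * hpa t
  have hy : HasACDeriv (fun t => ω * u t) (fun t => ω * v t) c d :=
    (hsol.hasACDeriv_left hcd.le ha).const_mul ω
  obtain ⟨t, ht, hut⟩ := hu0
  obtain ⟨θ, r, hθ, hpolar⟩ := exists_pruferAngle hpi hx hy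
    ⟨t, by rwa [uIcc_of_le hcd.le], Or.inr (mul_ne_zero hω.ne' hut)⟩
  have hinc := hθ.add_two_mul_pi_le_pruferAngle_sub hω hcd.le hp hp0 hpolar hv
    (by rw [hu]; ring) hm
  have hcot := hθ.two_mul_cot_lt_integral (N := m + 2) (by positivity) hω hcd
    (by rw [hm]; push_cast; nlinarith [pi_pos]) hpi hp (by exact_mod_cast hinc)
  rw [hm] at hcot
  push_cast at hcot
  calc 2 * (m + 2) * ω * cot (m * π / (2 * (m + 2)))
      = ω * (2 * (m + 2) * cot (m * π / (2 * (m + 2)))) := by ring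
    _ < ω * ∫ t in c..d, p t := mul_lt_mul_of_pos_left hcot hω
    _ = ∫ t in c..d, (a t - ω ^ 2) := by
        simp_rw [hpa, intervalIntegral.integral_const_mul]

theorem integral_abs_sub_eq_of_prec {T k : ℝ} (hT : 0 ≤ T) (h : Prec T (fun _ => k) a) :
    ∫ x in (0 : ℝ)..T, |a x - k| = ∫ x in (0 : ℝ)..T, (a x - k) := by
  rw [intervalIntegral.integral_of_le hT, intervalIntegral.integral_of_le hT]
  refine integral_congr_ae ?_
  filter_upwards [ae_restrict_of_ae_restrict_of_subset Ioc_subset_Icc_self h.1] with x hx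
    using abs_of_nonneg (sub_nonneg.2 hx)

theorem betaT1_lt_integral_of_mem_LambdaTildeN {T : ℝ} {n : ℕ} (hT : 0 < T) (hn : 1 ≤ n)
    (ha : a ∈ LambdaTildeN T n) : betaT1 T n < ∫ x in (0 : ℝ)..T, |a x - lamT T n| := by
  obtain ⟨⟨-, -, hint⟩, hprec, u, v, ⟨hsol, hu, hv⟩, hu0⟩ := ha
  rw [integral_abs_sub_eq_of_prec hT.le hprec]
  obtain ⟨m, rfl⟩ : ∃ m, n = m + 1 := ⟨n - 1, by omega⟩
  set ω : ℝ := (2 * m + 1) * π / T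
  have hlam : lamT T (m + 1) = ω ^ 2 := by
    simp only [lamT, ω]; push_cast; field_simp; ring
  have hodd : ((-1) : ℝ) ^ (2 * m + 1) = -1 := Odd.neg_one_pow ⟨m, rfl⟩
  simp only [hlam] at hprec ⊢
  have hlt := hsol.two_mul_cot_lt_integral_sub (ω := ω) (m := 2 * m + 1) (by positivity) hT
    (by simp only [ω]; push_cast; field_simp; ring)
    ((intervalIntegrable_iff_integrableOn_Icc_of_le hT.le).2 hint) hprec.1
    (fun h => hprec.2.ne' ?_) (by rw [hodd]; linarith) (by rw [hodd]; linarith) hu0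
  · convert hlt using 1
    simp only [betaT1, ω]
    push_cast
    ring_nf
  · rw [ae_restrict_iff' measurableSet_Icc] at h
    exact measure_mono_null (fun x hx => fun h' => hx.2.ne' (h' hx.1)) h

end LowerBound

section ArcsinWave

variable {r : ℝ}

/-- The triangle wave of slope `±1` and period `2 π`, with its corners smoothed: `r = 1` gives the
triangle wave itself, and `r → 1⁻` is the limit in which near-extremal potentials concentrate. -/
noncomputable def arcsinWave (r X : ℝ) : ℝ := arcsin (r * sin X)

theorem abs_mul_sin_lt_one (hr : r ∈ Ioo 0 1) (X : ℝ) : |r * sin X| < 1 := by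
  rw [abs_mul, abs_of_pos hr.1]
  exact (mul_le_of_le_one_right hr.1.le (abs_sin_le_one X)).trans_lt hr.2

theorem sin_arcsinWave (hr : r ∈ Ioo 0 1) (X : ℝ) : sin (arcsinWave r X) = r * sin X := by
  have h := abs_lt.1 (abs_mul_sin_lt_one hr X)
  exact sin_arcsin h.1.le h.2.le

theorem arcsinWave_mem_Ioo (hr : r ∈ Ioo 0 1) (X : ℝ) :
    arcsinWave r X ∈ Ioo (-(π / 2)) (π / 2) := by
  have h := abs_lt.1 (abs_mul_sin_lt_one hr X)
  exact ⟨neg_pi_div_two_lt_arcsin.2 h.1, arcsin_lt_pi_div_two.2 h.2⟩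

theorem cos_arcsinWave_pos (hr : r ∈ Ioo 0 1) (X : ℝ) : 0 < cos (arcsinWave r X) :=
  cos_pos_of_mem_Ioo (arcsinWave_mem_Ioo hr X)

theorem arcsinWave_antiperiodic (r : ℝ) : Function.Antiperiodic (arcsinWave r) π := fun X => by
  simp [arcsinWave, sin_add_pi]

theorem hasDerivAt_arcsinWave (hr : r ∈ Ioo 0 1) (X : ℝ) :
    HasDerivAt (arcsinWave r) (r * cos X / cos (arcsinWave r X)) X := by
  have h := abs_lt.1 (abs_mul_sin_lt_one hr X)
  refine ((hasDerivAt_arcsin h.1.ne' h.2.ne).comp X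
    ((hasDerivAt_sin X).const_mul r)).congr_deriv ?_
  rw [arcsinWave, cos_arcsin]
  ring

theorem continuous_arcsinWave (r : ℝ) : Continuous (arcsinWave r) := by
  unfold arcsinWave; fun_prop

theorem continuous_cos_arcsinWave (r : ℝ) : Continuous fun X => cos (arcsinWave r X) :=
  continuous_cos.comp (continuous_arcsinWave r)

/-- The slope deficit `1 - (σ')²` of the smoothed triangle wave `σ = arcsinWave r`, in closed
form. It is also the factor in `σ'' = -(1 - (σ')²) tan σ`. -/
noncomputable def arcsinWaveDeficit (r X : ℝ) : ℝ := (1 - r ^ 2) / cos (arcsinWave r X) ^ 2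

theorem one_sub_sq_deriv_arcsinWave (hr : r ∈ Ioo 0 1) (X : ℝ) :
    1 - (r * cos X / cos (arcsinWave r X)) ^ 2 = arcsinWaveDeficit r X := by
  have hc := (cos_arcsinWave_pos hr X).ne'
  have hs := sin_sq_add_cos_sq (arcsinWave r X)
  rw [sin_arcsinWave hr X] at hs
  rw [arcsinWaveDeficit]
  field_simp
  linear_combination hs - r ^ 2 * sin_sq_add_cos_sq X

theorem hasDerivAt_deriv_arcsinWave (hr : r ∈ Ioo 0 1) (X : ℝ) :
    HasDerivAt (fun X => r * cos X / cos (arcsinWave r X))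
      (-(arcsinWaveDeficit r X * tan (arcsinWave r X))) X := by
  have hc := (cos_arcsinWave_pos hr X).ne'
  have hs := sin_arcsinWave hr X
  have hs2 := sin_sq_add_cos_sq (arcsinWave r X)
  refine (((hasDerivAt_cos X).const_mul r).fun_div (hasDerivAt_arcsinWave hr X).cos
    hc).congr_deriv ?_
  rw [arcsinWaveDeficit, tan_eq_sin_div_cos]
  field_simp
  rw [hs] at hs2 ⊢
  linear_combination r * sin X * (r ^ 2 * sin_sq_add_cos_sq X - hs2)

theorem arcsinWaveDeficit_pos (hr : r ∈ Ioo 0 1) (X : ℝ) : 0 < arcsinWaveDeficit r X := by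
  have := cos_arcsinWave_pos hr X
  have : 0 < 1 - r ^ 2 := by nlinarith [hr.1, hr.2]
  exact div_pos this (by positivity)

theorem continuous_arcsinWaveDeficit (hr : r ∈ Ioo 0 1) : Continuous (arcsinWaveDeficit r) :=
  continuous_const.div ((continuous_cos_arcsinWave r).pow 2)
    fun X => pow_ne_zero 2 (cos_arcsinWave_pos hr X).ne'

theorem arcsinWaveDeficit_periodic (r : ℝ) : Function.Periodic (arcsinWaveDeficit r) π :=
  fun X => by simp only [arcsinWaveDeficit, arcsinWave_antiperiodic r X, cos_neg]

theorem continuous_arcsinWaveDeficit_mul_tan (hr : r ∈ Ioo 0 1) :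
    Continuous fun X => arcsinWaveDeficit r X * tan (arcsinWave r X) := by
  simp only [tan_eq_sin_div_cos]
  exact (continuous_arcsinWaveDeficit hr).mul
    ((continuous_sin.comp (continuous_arcsinWave r)).div (continuous_cos_arcsinWave r)
      fun X => (cos_arcsinWave_pos hr X).ne')

theorem integral_arcsinWaveDeficit_mul_tan (hr : r ∈ Ioo 0 1) :
    ∫ X in (0 : ℝ)..π, arcsinWaveDeficit r X * tan (arcsinWave r X) = 2 * r := by
  rw [intervalIntegral.integral_eq_sub_of_hasDerivAt
    (fun X _ => by simpa using (hasDerivAt_deriv_arcsinWave hr X).fun_neg)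
    ((continuous_arcsinWaveDeficit_mul_tan hr).intervalIntegrable _ _)]
  simp [arcsinWave]
  ring

theorem integral_arcsinWaveDeficit_le (hr : r ∈ Ioo 0 1) :
    ∫ X in (0 : ℝ)..π, arcsinWaveDeficit r X ≤ 4 * arccos r := by
  set σ' : ℝ → ℝ := fun X => r * cos X / cos (arcsinWave r X)
  have hσ' : Continuous σ' := (continuous_cos.const_mul r).div (continuous_cos_arcsinWave r)
    fun X => (cos_arcsinWave_pos hr X).ne'
  have hshift := (arcsinWaveDeficit_periodic r).intervalIntegral_add_eq 0 (-(π / 2))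
  rw [zero_add, show -(π / 2) + π = π / 2 by ring] at hshift
  calc ∫ X in (0 : ℝ)..π, arcsinWaveDeficit r X
      = ∫ X in (-(π / 2))..(π / 2), arcsinWaveDeficit r X := hshift
    _ ≤ ∫ X in (-(π / 2))..(π / 2), (2 - 2 * σ' X) := by
        refine intervalIntegral.integral_mono_on (by linarith [pi_pos])
          ((continuous_arcsinWaveDeficit hr).intervalIntegrable _ _)
          ((continuous_const.sub (hσ'.const_mul 2)).intervalIntegrable _ _) fun X _ => ?_
        rw [← one_sub_sq_deriv_arcsinWave hr X]
        nlinarith [sq_nonneg (1 - σ' X)]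
    _ = 4 * arccos r := by
        rw [intervalIntegral.integral_sub intervalIntegrable_const
          ((hσ'.const_mul 2).intervalIntegrable _ _), intervalIntegral.integral_const_mul,
          intervalIntegral.integral_eq_sub_of_hasDerivAt
            (fun X _ => hasDerivAt_arcsinWave hr X) (hσ'.intervalIntegrable _ _)]
        simp [arcsinWave, arccos]
        ring

end ArcsinWave

section TanMulCot

variable {ρ s : ℝ}

/-- The function `s ↦ ρ tan s cot (ρ s)`, written with `sinc` so that it takes its limit value `1`
at `s = 0`. -/
noncomputable def tanMulCot (ρ s : ℝ) : ℝ := sinc s * cos (ρ * s) / (cos s * sinc (ρ * s))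

theorem mul_sinc (x : ℝ) : x * sinc x = sin x := by
  rcases eq_or_ne x 0 with rfl | hx
  · simp
  · rw [sinc_of_ne_zero hx, mul_div_cancel₀ _ hx]

theorem sinc_ne_zero_of_abs_lt_pi {x : ℝ} (hx : |x| < π) : sinc x ≠ 0 := by
  rcases eq_or_ne x 0 with rfl | hx0
  · simp
  · have h := abs_lt.1 hx
    rw [sinc_of_ne_zero hx0]
    exact div_ne_zero ((sin_eq_zero_iff_of_lt_of_lt h.1 h.2).not.2 hx0) hx0

theorem tanMulCot_neg (ρ s : ℝ) : tanMulCot ρ (-s) = tanMulCot ρ s := by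
  simp [tanMulCot, sinc_neg]

theorem sinc_mul_ne_zero (hρ : ρ ∈ Ioo 0 1) (hs : s ∈ Ioo (-(π / 2)) (π / 2)) :
    sinc (ρ * s) ≠ 0 := by
  refine sinc_ne_zero_of_abs_lt_pi ?_
  rw [abs_mul, abs_of_pos hρ.1]
  calc ρ * |s| ≤ |s| := mul_le_of_le_one_left (abs_nonneg s) hρ.2.le
    _ < π := (abs_lt.2 hs).trans (by linarith [pi_pos])

theorem tanMulCot_mul_sin (hρ : ρ ∈ Ioo 0 1) (hs : s ∈ Ioo (-(π / 2)) (π / 2)) :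
    tanMulCot ρ s * sin (ρ * s) = ρ * tan s * cos (ρ * s) := by
  have hsinc := sinc_mul_ne_zero hρ hs
  have hcos := (cos_pos_of_mem_Ioo hs).ne'
  rw [tanMulCot, ← mul_sinc (ρ * s), tan_eq_sin_div_cos, ← mul_sinc s]
  field_simp

theorem continuousOn_tanMulCot (hρ : ρ ∈ Ioo 0 1) :
    ContinuousOn (tanMulCot ρ) (Ioo (-(π / 2)) (π / 2)) := by
  refine ContinuousOn.div (by fun_prop) (by fun_prop) fun s hs => ?_
  exact mul_ne_zero (cos_pos_of_mem_Ioo hs).ne' (sinc_mul_ne_zero hρ hs)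

theorem sin_mul_pos (hρ : ρ ∈ Ioo 0 1) (hs : s ∈ Ioc 0 (π / 2)) : 0 < sin (ρ * s) := by
  refine sin_pos_of_pos_of_lt_pi (mul_pos hρ.1 hs.1) ?_
  nlinarith [hρ.1, hρ.2, hs.1, hs.2]

theorem tanMulCot_zero (ρ : ℝ) : tanMulCot ρ 0 = 1 := by simp [tanMulCot]

theorem le_tanMulCot_of_nonneg (hρ : ρ ∈ Ioo 0 1) (hs : s ∈ Ico 0 (π / 2)) :
    ρ ≤ tanMulCot ρ s := by
  rcases hs.1.eq_or_lt with rfl | hs0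
  · rw [tanMulCot_zero]
    exact hρ.2.le
  have hsI : s ∈ Ioo (-(π / 2)) (π / 2) := ⟨by linarith [pi_pos], hs.2⟩
  have hcos := cos_pos_of_mem_Ioo hsI
  have hsub : 0 ≤ sin (s - ρ * s) :=
    sin_nonneg_of_nonneg_of_le_pi (by nlinarith [hρ.2]) (by nlinarith [mul_pos hρ.1 hs0, hs.2])
  refine le_of_mul_le_mul_right ?_ (sin_mul_pos hρ ⟨hs0, hs.2.le⟩)
  rw [tanMulCot_mul_sin hρ hsI, tan_eq_sin_div_cos, mul_assoc, div_mul_eq_mul_div]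
  refine mul_le_mul_of_nonneg_left ?_ hρ.1.le
  rw [le_div_iff₀ hcos]
  rw [sin_sub] at hsub
  linarith

theorem le_tanMulCot (hρ : ρ ∈ Ioo 0 1) (hs : s ∈ Ioo (-(π / 2)) (π / 2)) :
    ρ ≤ tanMulCot ρ s := by
  rcases le_total 0 s with h | h
  · exact le_tanMulCot_of_nonneg hρ ⟨h, hs.2⟩
  · rw [← tanMulCot_neg]
    exact le_tanMulCot_of_nonneg hρ ⟨by linarith, by linarith [hs.1]⟩

theorem mul_sin_le_sin_mul (hρ : ρ ∈ Icc 0 1) (hs : s ∈ Icc 0 π) : ρ * sin s ≤ sin (ρ * s) := by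
  have h := strictConcaveOn_sin_Icc.concaveOn.2 (left_mem_Icc.2 pi_pos.le) hs
    (sub_nonneg.2 hρ.2) hρ.1 (by ring)
  simpa using h

theorem tanMulCot_le (hρ : ρ ∈ Ioo 0 1) (hs : s ∈ Ico 0 (π / 2)) :
    tanMulCot ρ s ≤ ρ * cot (ρ * (π / 2)) * tan s + (sin (ρ * (π / 2)))⁻¹ := by
  have hend : 0 < sin (ρ * (π / 2)) := sin_mul_pos hρ ⟨pi_div_two_pos, le_rfl⟩
  rcases hs.1.eq_or_lt with rfl | hs0
  · simpa [tanMulCot_zero] using (one_le_inv₀ hend).2 (sin_le_one _)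
  have hsI : s ∈ Ioo (-(π / 2)) (π / 2) := ⟨by linarith [pi_pos], hs.2⟩
  have hcos := cos_pos_of_mem_Ioo hsI
  have hsin := sin_mul_pos hρ ⟨hs0, hs.2.le⟩
  have hcompl : sin (ρ * (π / 2) - ρ * s) ≤ cos s := by
    rw [← sin_pi_div_two_sub, ← mul_sub]
    exact sin_le_sin_of_le_of_le_pi_div_two (by nlinarith [pi_pos, hρ.1, hs.2])
      (by linarith) (by nlinarith [hρ.2, hs.2])
  have hsin_s : 0 ≤ sin s := sin_nonneg_of_nonneg_of_le_pi hs0.le (by linarith [hs.2, pi_pos])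
  have hkey : ρ * sin s * sin (ρ * (π / 2) - ρ * s) ≤ sin (ρ * s) * cos s := by
    have hs' := mul_sin_le_sin_mul (Ioo_subset_Icc_self hρ) ⟨hs0.le, by linarith [hs.2, pi_pos]⟩
    have := mul_nonneg hρ.1.le hsin_s
    nlinarith
  refine le_of_mul_le_mul_right ?_ hsin
  rw [tanMulCot_mul_sin hρ hsI, tan_eq_sin_div_cos, cot_eq_cos_div_sin]
  rw [sin_sub] at hkey
  set A := ρ * (π / 2)
  have hgap : (ρ * (cos A / sin A) * (sin s / cos s) + (sin A)⁻¹) * sin (ρ * s) -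
      ρ * (sin s / cos s) * cos (ρ * s) = (sin (ρ * s) * cos s -
      ρ * sin s * (sin A * cos (ρ * s) - cos A * sin (ρ * s))) / (sin A * cos s) := by
    field_simp
    ring
  rw [← sub_nonneg, hgap]
  exact div_nonneg (sub_nonneg.2 hkey) (mul_pos hend hcos).le

end TanMulCot

section NearExtremalPotential

variable {ρ r : ℝ}

/-- The potential for which `sin (ρ * arcsinWave r X)` solves `U'' + a U = 0`, minus `ρ ^ 2`; it
concentrates at the corners `X ∈ π / 2 + π ℤ` of the triangle wave as `r → 1⁻`. -/
noncomputable def nearExtremalExcess (ρ r X : ℝ) : ℝ :=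
  arcsinWaveDeficit r X * (tanMulCot ρ (arcsinWave r X) - ρ ^ 2)

theorem continuous_tanMulCot_arcsinWave (hρ : ρ ∈ Ioo 0 1) (hr : r ∈ Ioo 0 1) :
    Continuous fun X => tanMulCot ρ (arcsinWave r X) :=
  (continuousOn_tanMulCot hρ).comp_continuous (continuous_arcsinWave r) (arcsinWave_mem_Ioo hr)

theorem continuous_nearExtremalExcess (hρ : ρ ∈ Ioo 0 1) (hr : r ∈ Ioo 0 1) :
    Continuous (nearExtremalExcess ρ r) :=
  (continuous_arcsinWaveDeficit hr).mul
    ((continuous_tanMulCot_arcsinWave hρ hr).sub continuous_const)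

theorem nearExtremalExcess_periodic (ρ r : ℝ) : Function.Periodic (nearExtremalExcess ρ r) π :=
  fun X => by
    simp only [nearExtremalExcess, arcsinWaveDeficit_periodic r X, arcsinWave_antiperiodic r X,
      tanMulCot_neg]

theorem nearExtremalExcess_pos (hρ : ρ ∈ Ioo 0 1) (hr : r ∈ Ioo 0 1) (X : ℝ) :
    0 < nearExtremalExcess ρ r X := by
  have := le_tanMulCot hρ (arcsinWave_mem_Ioo hr X)
  exact mul_pos (arcsinWaveDeficit_pos hr X) (by nlinarith [hρ.1, hρ.2])

theorem hasDerivAt_sin_mul_arcsinWave (ρ : ℝ) (hr : r ∈ Ioo 0 1) (X : ℝ) :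
    HasDerivAt (fun X => sin (ρ * arcsinWave r X))
      (ρ * cos (ρ * arcsinWave r X) * (r * cos X / cos (arcsinWave r X))) X :=
  ((hasDerivAt_arcsinWave hr X).const_mul ρ).sin.congr_deriv (by ring)

theorem hasDerivAt_deriv_sin_mul_arcsinWave (hρ : ρ ∈ Ioo 0 1) (hr : r ∈ Ioo 0 1) (X : ℝ) :
    HasDerivAt (fun X => ρ * cos (ρ * arcsinWave r X) * (r * cos X / cos (arcsinWave r X)))
      (-((ρ ^ 2 + nearExtremalExcess ρ r X) * sin (ρ * arcsinWave r X))) X := by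
  have h := (((hasDerivAt_arcsinWave hr X).const_mul ρ).cos.const_mul ρ).fun_mul
    (hasDerivAt_deriv_arcsinWave hr X)
  refine h.congr_deriv ?_
  rw [nearExtremalExcess]
  linear_combination
    ρ ^ 2 * sin (ρ * arcsinWave r X) * one_sub_sq_deriv_arcsinWave hr X +
    arcsinWaveDeficit r X * tanMulCot_mul_sin hρ (arcsinWave_mem_Ioo hr X)

theorem integral_nearExtremalExcess_le (hρ : ρ ∈ Ioo 0 1) (hr : r ∈ Ioo 0 1) :
    ∫ X in (0 : ℝ)..π, nearExtremalExcess ρ r X ≤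
      2 * ρ * cot (ρ * (π / 2)) * r + 4 * (sin (ρ * (π / 2)))⁻¹ * arccos r := by
  have hdef := continuous_arcsinWaveDeficit hr
  have hdeftan := continuous_arcsinWaveDeficit_mul_tan hr
  have hsin : 0 < sin (ρ * (π / 2)) := sin_mul_pos hρ ⟨pi_div_two_pos, le_rfl⟩
  calc ∫ X in (0 : ℝ)..π, nearExtremalExcess ρ r X
      ≤ ∫ X in (0 : ℝ)..π, (ρ * cot (ρ * (π / 2)) * (arcsinWaveDeficit r X * tan (arcsinWave r X)) +
          (sin (ρ * (π / 2)))⁻¹ * arcsinWaveDeficit r X) := by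
        refine intervalIntegral.integral_mono_on pi_pos.le
          ((continuous_nearExtremalExcess hρ hr).intervalIntegrable _ _)
          (((hdeftan.const_mul _).add (hdef.const_mul _)).intervalIntegrable _ _) fun X hX => ?_
        have hwave : arcsinWave r X ∈ Ico 0 (π / 2) :=
          ⟨arcsin_nonneg.2 (mul_nonneg hr.1.le (sin_nonneg_of_mem_Icc hX)),
            (arcsinWave_mem_Ioo hr X).2⟩
        rw [nearExtremalExcess]
        nlinarith [tanMulCot_le hρ hwave, arcsinWaveDeficit_pos hr X, sq_nonneg ρ]
    _ = ρ * cot (ρ * (π / 2)) * (2 * r) +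
          (sin (ρ * (π / 2)))⁻¹ * ∫ X in (0 : ℝ)..π, arcsinWaveDeficit r X := by
        rw [intervalIntegral.integral_add ((hdeftan.const_mul _).intervalIntegrable _ _)
          ((hdef.const_mul _).intervalIntegrable _ _), intervalIntegral.integral_const_mul,
          intervalIntegral.integral_const_mul, integral_arcsinWaveDeficit_mul_tan hr]
    _ ≤ 2 * ρ * cot (ρ * (π / 2)) * r + 4 * (sin (ρ * (π / 2)))⁻¹ * arccos r := by
        linarith [mul_le_mul_of_nonneg_left (integral_arcsinWaveDeficit_le hr)
          (inv_nonneg.2 hsin.le)]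

/-- The potential `ρ ^ 2 + nearExtremalExcess ρ r` under the change of variable `X = K x`. Taking
`ρ = (2 n - 1) / (2 n + 1)` and `K T = (2 n + 1) π` puts it in `LambdaTildeN T n`, and `r → 1⁻`
brings its `L¹` distance to `lamT T n` down to `betaT1 T n`. -/
noncomputable def nearExtremalPotential (K ρ r x : ℝ) : ℝ :=
  K ^ 2 * (ρ ^ 2 + nearExtremalExcess ρ r (K * x))

variable {K T : ℝ}

theorem continuous_nearExtremalPotential (K : ℝ) (hρ : ρ ∈ Ioo 0 1) (hr : r ∈ Ioo 0 1) :
    Continuous (nearExtremalPotential K ρ r) := by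
  have := continuous_nearExtremalExcess hρ hr
  unfold nearExtremalPotential
  fun_prop

theorem memLT_nearExtremalPotential {N : ℕ} (hρ : ρ ∈ Ioo 0 1) (hr : r ∈ Ioo 0 1)
    (hK : K * T = N * π) : MemLT T (nearExtremalPotential K ρ r) := by
  have hcont := continuous_nearExtremalPotential K hρ hr
  refine ⟨hcont.measurable, fun x => ?_, hcont.integrableOn_Icc⟩
  simp only [nearExtremalPotential, mul_add, hK, (nearExtremalExcess_periodic ρ r).nat_mul N _]

theorem prec_nearExtremalPotential (hT : 0 < T) (hK : K ≠ 0) (hρ : ρ ∈ Ioo 0 1)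
    (hr : r ∈ Ioo 0 1) : Prec T (fun _ => (K * ρ) ^ 2) (nearExtremalPotential K ρ r) := by
  have hlt (x : ℝ) : (K * ρ) ^ 2 < nearExtremalPotential K ρ r x := by
    have := mul_pos (sq_pos_of_ne_zero hK) (nearExtremalExcess_pos hρ hr (K * x))
    rw [nearExtremalPotential]
    linarith
  refine ⟨Filter.Eventually.of_forall fun x => (hlt x).le, ?_⟩
  simp only [hlt, and_true, ofPred_mem_eq, Real.volume_Icc, sub_zero]
  simpa using hT

theorem isSolOn_of_hasDerivAt {a u v : ℝ → ℝ} (hu : ∀ x, HasDerivAt u (v x) x)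
    (hv : ∀ x, HasDerivAt v (-(a x * u x)) x) (ha : Continuous a) (c d : ℝ) :
    IsSolOn a u v c d := by
  have hucont : Continuous u := continuous_iff_continuousAt.2 fun x => (hu x).continuousAt
  refine ⟨fun x _ => (hu x).hasDerivWithinAt, fun x _ => ?_⟩
  have h := intervalIntegral.integral_eq_sub_of_hasDerivAt (a := c) (b := x) (fun t _ => hv t)
    ((ha.mul hucont).neg.intervalIntegrable _ _)
  rw [intervalIntegral.integral_neg] at h
  linarith

theorem isSolOn_sin_mul_arcsinWave (K : ℝ) (hρ : ρ ∈ Ioo 0 1) (hr : r ∈ Ioo 0 1) (c d : ℝ) :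
    IsSolOn (nearExtremalPotential K ρ r) (fun x => sin (ρ * arcsinWave r (K * x)))
      (fun x => K * (ρ * cos (ρ * arcsinWave r (K * x)) *
        (r * cos (K * x) / cos (arcsinWave r (K * x))))) c d := by
  have hmul (x : ℝ) : HasDerivAt (fun x => K * x) K x := by
    simpa using (hasDerivAt_id x).const_mul K
  refine isSolOn_of_hasDerivAt (fun x => ?_) (fun x => ?_)
    (continuous_nearExtremalPotential K hρ hr) c d
  · exact ((hasDerivAt_sin_mul_arcsinWave ρ hr (K * x)).comp x (hmul x)).congr_deriv
      (mul_comm _ _)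
  · refine (((hasDerivAt_deriv_sin_mul_arcsinWave hρ hr (K * x)).comp x
      (hmul x)).const_mul K).congr_deriv ?_
    rw [nearExtremalPotential]
    ring

theorem exists_antiperiodicSol_nearExtremalPotential {N : ℕ} (hT : 0 < T) (hN : Odd N)
    (hρ : ρ ∈ Ioo 0 1) (hr : r ∈ Ioo 0 1) (hK : K * T = N * π) :
    ∃ u v : ℝ → ℝ, AntiperiodicSol T (nearExtremalPotential K ρ r) u v ∧
      ∃ x ∈ Icc 0 T, u x ≠ 0 := by
  have hN1 : (1 : ℝ) ≤ N := by exact_mod_cast hN.pos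
  have hwave_left : arcsinWave r 0 = 0 := by simp [arcsinWave]
  have hwave_right : arcsinWave r (K * T) = 0 := by simp [arcsinWave, hK, sin_nat_mul_pi]
  have hcos : cos (K * T) = -1 := by simp [hK, cos_nat_mul_pi, hN.neg_one_pow]
  refine ⟨_, _, ⟨isSolOn_sin_mul_arcsinWave K hρ hr 0 T, ?_, ?_⟩, T / (2 * N),
    ⟨by positivity, div_le_self hT.le (by linarith)⟩, ?_⟩
  · simp [hwave_left, hwave_right]
  · simp only [mul_zero, hwave_left, hwave_right, hcos, cos_zero]
    ring
  · have hmid : K * (T / (2 * N)) = π / 2 := by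
      rw [← mul_div_assoc, hK]
      field_simp
    have hs : arcsinWave r (π / 2) ∈ Ioc 0 (π / 2) := by
      rw [arcsinWave, sin_pi_div_two, mul_one]
      exact ⟨arcsin_pos.2 hr.1, arcsin_le_pi_div_two r⟩
    simp only [hmid]
    exact (sin_mul_pos hρ hs).ne'

theorem integral_nearExtremalPotential_sub {N : ℕ} (hρ : ρ ∈ Ioo 0 1)
    (hr : r ∈ Ioo 0 1) (hK : K * T = N * π) :
    ∫ x in (0 : ℝ)..T, (nearExtremalPotential K ρ r x - (K * ρ) ^ 2) =
      K * N * ∫ X in (0 : ℝ)..π, nearExtremalExcess ρ r X := by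
  have hper := (nearExtremalExcess_periodic ρ r).intervalIntegral_add_zsmul_eq (N : ℤ) 0
    fun s t => (continuous_nearExtremalExcess hρ hr).intervalIntegrable s t
  simp only [zsmul_eq_mul, Int.cast_natCast, zero_add] at hper
  calc ∫ x in (0 : ℝ)..T, (nearExtremalPotential K ρ r x - (K * ρ) ^ 2)
      = ∫ x in (0 : ℝ)..T, K ^ 2 * nearExtremalExcess ρ r (K * x) := by
        congr 1 with x
        rw [nearExtremalPotential]
        ring
    _ = K * (K * ∫ x in (0 : ℝ)..T, nearExtremalExcess ρ r (K * x)) := by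
        rw [intervalIntegral.integral_const_mul]
        ring
    _ = K * N * ∫ X in (0 : ℝ)..π, nearExtremalExcess ρ r X := by
        rw [intervalIntegral.mul_integral_comp_mul_left, mul_zero, hK, hper, mul_assoc]

theorem exists_mem_LambdaTildeN_integral_le {n : ℕ} (hT : 0 < T) (hn : 1 ≤ n) :
    ∃ C : ℝ, ∀ r ∈ Ioo (0 : ℝ) 1, ∃ a ∈ LambdaTildeN T n,
      ∫ x in (0 : ℝ)..T, |a x - lamT T n| ≤ betaT1 T n * r + C * arccos r := by
  have hn1 : (1 : ℝ) ≤ n := by exact_mod_cast hn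
  set N : ℝ := 2 * n + 1
  have hN : (0 : ℝ) < N := by positivity
  set K : ℝ := N * π / T
  set ρ : ℝ := (2 * n - 1) / N
  have hK : 0 < K := by positivity
  have hKT : K * T = (2 * n + 1 : ℕ) * π := by
    push_cast; exact div_mul_cancel₀ _ hT.ne'
  have hρ : ρ ∈ Ioo 0 1 :=
    ⟨div_pos (by linarith) hN, (div_lt_one hN).2 (by simp only [N]; linarith)⟩
  have hlam : lamT T n = (K * ρ) ^ 2 := by simp only [lamT, K, ρ]; field_simp
  have hbeta : betaT1 T n = K * N * (2 * ρ * cot (ρ * (π / 2))) := by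
    rw [betaT1, show ρ * (π / 2) = (2 * n - 1) * π / (2 * N) by simp only [ρ]; field_simp]
    simp only [K, ρ, N]
    field_simp
  refine ⟨K * N * (4 * (sin (ρ * (π / 2)))⁻¹), fun r hr => ⟨nearExtremalPotential K ρ r,
    ⟨memLT_nearExtremalPotential hρ hr hKT, ?_,
      exists_antiperiodicSol_nearExtremalPotential hT ⟨n, rfl⟩ hρ hr hKT⟩, ?_⟩⟩
  · rw [hlam]
    exact prec_nearExtremalPotential hT hK.ne' hρ hr
  · rw [hlam, integral_abs_sub_eq_of_prec hT.le (prec_nearExtremalPotential hT hK.ne' hρ hr),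
      integral_nearExtremalPotential_sub hρ hr hKT, hbeta]
    push_cast
    calc K * N * ∫ X in (0 : ℝ)..π, nearExtremalExcess ρ r X
        ≤ K * N * (2 * ρ * cot (ρ * (π / 2)) * r + 4 * (sin (ρ * (π / 2)))⁻¹ * arccos r) := by
          gcongr
          exact integral_nearExtremalExcess_le hρ hr
      _ = _ := by ring

theorem sInf_integral_abs_sub_le_betaT1 {n : ℕ} (hT : 0 < T) (hn : 1 ≤ n) :
    sInf ((fun a : ℝ → ℝ => ∫ x in (0 : ℝ)..T, |a x - lamT T n|) '' LambdaTildeN T n) ≤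
      betaT1 T n := by
  obtain ⟨C, hC⟩ := exists_mem_LambdaTildeN_integral_le hT hn
  have hlim : Filter.Tendsto (fun r => betaT1 T n * r + C * arccos r) (nhdsWithin 1 (Iio 1))
      (nhds (betaT1 T n)) := by
    have hcont : Continuous fun r => betaT1 T n * r + C * arccos r := by fun_prop
    simpa using (hcont.tendsto 1).mono_left nhdsWithin_le_nhds
  refine ge_of_tendsto hlim ?_
  filter_upwards [Ioo_mem_nhdsLT one_pos] with r hr
  obtain ⟨a, ha, hle⟩ := hC r hr
  refine (csInf_le ⟨0, ?_⟩ (mem_image_of_mem _ ha)).trans hle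
  rintro _ ⟨b, -, rfl⟩
  exact intervalIntegral.integral_nonneg hT.le fun x _ => abs_nonneg _

end NearExtremalPotential

theorem stmt9 (T : ℝ) (hT : 0 < T) (n : ℕ) (hn : 1 ≤ n) :
    (∀ a ∈ LambdaTildeN T n, betaT1 T n < ∫ x in (0:ℝ)..T, |a x - lamT T n|) ∧
    ¬ ∃ a ∈ LambdaTildeN T n,
        (∫ x in (0:ℝ)..T, |a x - lamT T n|) =
          sInf ((fun a : ℝ → ℝ => ∫ x in (0:ℝ)..T, |a x - lamT T n|) '' LambdaTildeN T n) := by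
  have hstrict : ∀ a ∈ LambdaTildeN T n, betaT1 T n < ∫ x in (0 : ℝ)..T, |a x - lamT T n| :=
    fun _ ha => betaT1_lt_integral_of_mem_LambdaTildeN hT hn ha
  refine ⟨hstrict, ?_⟩
  rintro ⟨a, ha, hattained⟩
  exact (sInf_integral_abs_sub_le_betaT1 hT hn).not_gt (hattained ▸ hstrict a ha)
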